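/- arXiv:2411.07266 — 2 statements merged into one kernel-verified Lean document; each statement's English description precedes it below -/
import Mathlib

section
/- For every n ≥ 4, the fan F_n = K_1 ∨ P_{n-1} and the wheel W_n = K_1 ∨ C_{n-1} satisfy γ_MR(F_n) = γ_MR(W_n). -/
open Finset

namespace MRD

variable {V : Type*}

open scoped Classical

/-- Sum of `f` over the closed neighborhood of `v` in `G`:
`f(N[v]) = \sum_{u \in N[v]} f(u)`. -/
noncomputable def closedNbhdSum [Fintype V] (G : SimpleGraph V) (f : V → ℤ) (v : V) : ℤ :=
  ∑ u ∈ Finset.univ.filter (fun u => G.Adj v u ∨ u = v), f u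

/-- `f : V → {-1, 1, 2}` is a Majority Roman Dominating Function (MRDF) on `G`:
(i) `f(N[v]) ≥ 1` for at least half of the vertices, and (ii) every vertex with value `-1`
is adjacent to a vertex with value `2`. -/
noncomputable def IsMRDF [Fintype V] (G : SimpleGraph V) (f : V → ℤ) : Prop :=
  (∀ v, f v = -1 ∨ f v = 1 ∨ f v = 2) ∧
  Fintype.card V ≤ 2 * (Finset.univ.filter (fun v => 1 ≤ closedNbhdSum G f v)).card ∧
  (∀ u, f u = -1 → ∃ w, G.Adj u w ∧ f w = 2)

/-- The majority Roman domination number `γ_MR(G)`: the minimum weight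
`w(f) = ∑_v f(v)` over all MRDFs `f` on `G`. -/
noncomputable def mrdNum [Fintype V] (G : SimpleGraph V) : ℤ :=
  sInf {w : ℤ | ∃ f : V → ℤ, IsMRDF G f ∧ w = ∑ v, f v}

/-- The join `G ∨ H` of two simple graphs: disjoint union plus all edges between the parts. -/
def join {α β : Type*} (G : SimpleGraph α) (H : SimpleGraph β) : SimpleGraph (α ⊕ β) where
  Adj x y :=
    match x, y with
    | .inl a, .inl b => G.Adj a b
    | .inr a, .inr b => H.Adj a b
    | .inl _, .inr _ => True
    | .inr _, .inl _ => True
  symm := by constructor; rintro (a | a) (b | b) h <;> simp_all [SimpleGraph.adj_comm]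
  loopless := by constructor; rintro (a | a) h <;> simp_all

/-- The corona `G ∘ H` of two simple graphs: one copy of `G` and `|V(G)|` copies of `H`,
where the `v`-th vertex of `G` is joined to every vertex of the `v`-th copy of `H`. -/
def corona {α β : Type*} (G : SimpleGraph α) (H : SimpleGraph β) : SimpleGraph (α ⊕ α × β) where
  Adj x y :=
    match x, y with
    | .inl u, .inl v => G.Adj u v
    | .inr p, .inr q => p.1 = q.1 ∧ H.Adj p.2 q.2
    | .inl u, .inr p => u = p.1
    | .inr p, .inl u => u = p.1
  symm := by
    constructor
    rintro (u | ⟨u, x⟩) (v | ⟨v, y⟩) h <;> simp_all [SimpleGraph.adj_comm, eq_comm]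
  loopless := by constructor; rintro (u | ⟨u, x⟩) h <;> simp_all

/-- `S` is a dominating set of `G`. -/
def IsDomSet (G : SimpleGraph V) (S : Finset V) : Prop :=
  ∀ v, v ∉ S → ∃ u ∈ S, G.Adj v u

/-- The domination number `γ(G)`. -/
noncomputable def domNum [Fintype V] (G : SimpleGraph V) : ℕ :=
  sInf {k | ∃ S : Finset V, IsDomSet G S ∧ S.card = k}

/-- A set of vertices is independent if no two of its vertices are adjacent. -/
def IsIndepSet (G : SimpleGraph V) (S : Finset V) : Prop :=
  ∀ a ∈ S, ∀ b ∈ S, ¬ G.Adj a b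

/-- The independence number `β₀(G)`. -/
noncomputable def indepNum [Fintype V] (G : SimpleGraph V) : ℕ :=
  sSup {k | ∃ S : Finset V, IsIndepSet G S ∧ S.card = k}

/-- The cocktail party graph `K_{2n} - M` (complete graph minus a perfect matching),
realized on `Fin n × Fin 2`: `(i,a)` and `(j,b)` are adjacent iff `i ≠ j`. -/
def cocktail (n : ℕ) : SimpleGraph (Fin n × Fin 2) where
  Adj x y := x.1 ≠ y.1
  symm := ⟨fun _ _ h => h.symm⟩
  loopless := ⟨fun _ h => h rfl⟩

end MRD

namespace MRD
open scoped Classical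

theorem aux_sum_inl {m : ℕ} (H : SimpleGraph (Fin m)) (f : Fin 1 ⊕ Fin m → ℤ) :
    closedNbhdSum (join (⊤ : SimpleGraph (Fin 1)) H) f (Sum.inl 0) = ∑ v, f v := by
  unfold closedNbhdSum
  congr 1
  ext u
  rcases u with a | a
  · simp [Subsingleton.elim a 0]
  · simp [join]

theorem aux_sum_inr {m : ℕ} (H : SimpleGraph (Fin m)) (f : Fin 1 ⊕ Fin m → ℤ) (i : Fin m) :
    closedNbhdSum (join (⊤ : SimpleGraph (Fin 1)) H) f (Sum.inr i) =
      f (Sum.inl 0) + (f (Sum.inr i) + ∑ j ∈ univ.filter (fun j => H.Adj i j), f (Sum.inr j)) := by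
  unfold closedNbhdSum
  rw [Finset.sum_filter, Fintype.sum_sum_type]
  congr 1
  · simp [join]
  · have hi : i ∉ univ.filter (fun j => H.Adj i j) := by simp
    rw [← Finset.sum_insert (f := fun j => f (Sum.inr j)) hi,
      ← Finset.univ_inter (insert i _), ← Finset.sum_ite_mem]
    apply Finset.sum_congr rfl
    intro j _
    have : ((join (⊤ : SimpleGraph (Fin 1)) H).Adj (Sum.inr i) (Sum.inr j) ∨
        (Sum.inr j : Fin 1 ⊕ Fin m) = Sum.inr i) ↔
          j ∈ insert i (univ.filter (fun j => H.Adj i j)) := by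
      simp [join, or_comm]
    by_cases h : j ∈ insert i (univ.filter (fun j => H.Adj i j))
    · rw [if_pos (this.mpr h), if_pos h]
    · rw [if_neg (fun h' => h (this.mp h')), if_neg h]

theorem aux_card {m : ℕ} (P : Fin 1 ⊕ Fin m → Prop) [DecidablePred P] :
    (univ.filter P).card = (if P (Sum.inl 0) then 1 else 0) +
      (univ.filter (fun i : Fin m => P (Sum.inr i))).card := by
  rw [Finset.card_filter, Fintype.sum_sum_type, Finset.card_filter, Fin.sum_univ_one]

/-- Upper bound construction. -/
theorem aux_upper (m k : ℕ) (hk1 : m + 1 ≤ 6 * k) (hk2 : 3 * k ≤ m)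
    (H : SimpleGraph (Fin m)) (hH : SimpleGraph.pathGraph m ≤ H)
    (hdeg : ∀ i, (univ.filter (fun j => H.Adj i j)).card ≤ 2) :
    ∃ f, IsMRDF (join (⊤ : SimpleGraph (Fin 1)) H) f ∧ 2 - (m : ℤ) + 2 * k = ∑ v, f v := by
  let S : Finset (Fin m) := univ.filter (fun i => i.val % 3 = 1 ∧ i.val < 3 * k)
  have hS : S.card = k := by
    have : S = (univ : Finset (Fin k)).image (fun t : Fin k => (⟨3 * t.val + 1, by omega⟩ : Fin m)) := by
      ext i
      simp only [S, mem_filter, mem_univ, true_and, mem_image]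
      constructor
      · rintro ⟨h1, h2⟩
        exact ⟨⟨i.val / 3, by omega⟩, by ext; simp; omega⟩
      · rintro ⟨t, rfl⟩
        have := t.isLt
        simp; omega
    rw [this, Finset.card_image_of_injective, Finset.card_fin]
    intro a b h
    simp at h
    ext; omega
  let f : Fin 1 ⊕ Fin m → ℤ := Sum.elim (fun _ => 2) (fun i => if i ∈ S then 1 else -1)
  refine ⟨f, ⟨?_, ?_, ?_⟩, ?_⟩
  · rintro (a | a)
    · simp [f]
    · simp only [f, Sum.elim_inr]; split_ifs <;> simp
  · rw [aux_card]
    have h3 : 3 * k ≤ (univ.filter (fun i : Fin m =>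
        1 ≤ closedNbhdSum (join (⊤ : SimpleGraph (Fin 1)) H) f (Sum.inr i))).card := by
      have : ((univ : Finset (Fin (3 * k))).image (Fin.castLE hk2)).card = 3 * k := by
        rw [Finset.card_image_of_injective _ (Fin.castLE_injective hk2), Finset.card_fin]
      rw [← this]
      apply Finset.card_le_card
      intro i hi
      simp only [mem_image, mem_univ, true_and] at hi
      obtain ⟨t, rfl⟩ := hi
      have ht := t.isLt
      simp only [mem_filter, mem_univ, true_and]
      rw [aux_sum_inr]
      set i := Fin.castLE hk2 t with hi
      have hiv : i.val = t.val := rfl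
      have hge : ∀ j, -1 ≤ f (Sum.inr j) := by
        intro j; simp only [f, Sum.elim_inr]; split_ifs <;> simp
      have hd := hdeg i
      have hc : f (Sum.inl 0) = 2 := rfl
      by_cases hiS : i ∈ S
      · have h1 : f (Sum.inr i) = 1 := by simp [f, hiS]
        have := Finset.card_nsmul_le_sum (univ.filter (fun j => H.Adj i j))
          (fun j => f (Sum.inr j)) (-1) (fun j _ => hge j)
        simp only [nsmul_eq_mul] at this
        rw [h1, hc]; omega
      · have hne : t.val % 3 ≠ 1 := by
          intro h; exact hiS (by simp [S]; omega)
        obtain ⟨u, hu, huS⟩ : ∃ u, H.Adj i u ∧ u ∈ S := by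
          by_cases h0 : t.val % 3 = 0
          · refine ⟨⟨t.val + 1, by omega⟩, hH ?_, ?_⟩
            · rw [SimpleGraph.pathGraph_adj]; left; simp [hiv]
            · simp [S]; omega
          · refine ⟨⟨t.val - 1, by omega⟩, hH ?_, ?_⟩
            · rw [SimpleGraph.pathGraph_adj]; right; simp [hiv]; omega
            · simp [S]; omega
        have hmem : u ∈ univ.filter (fun j => H.Adj i j) := by simpa using hu
        rw [← Finset.add_sum_erase _ _ hmem]
        have := Finset.card_nsmul_le_sum ((univ.filter (fun j => H.Adj i j)).erase u)
          (fun j => f (Sum.inr j)) (-1) (fun j _ => hge j)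
        rw [Finset.card_erase_of_mem hmem] at this
        simp only [nsmul_eq_mul] at this
        have h1 : f (Sum.inr u) = 1 := by simp [f, huS]
        have := hge i
        rw [h1, hc]; omega
    simp only [Fintype.card_sum, Fintype.card_fin]
    omega
  · rintro (a | a) h
    · simp [f] at h
    · exact ⟨Sum.inl 0, by simp [join], rfl⟩
  · rw [Fintype.sum_sum_type]
    have : ∀ i : Fin m, f (Sum.inr i) = 2 * (if i ∈ S then 1 else 0) - 1 := by
      intro i; simp only [f, Sum.elim_inr]; split_ifs <;> simp
    simp only [this, Finset.sum_sub_distrib, ← Finset.mul_sum, Finset.sum_boole]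
    simp [f, hS]
    ring

/-- Lower bound. -/
theorem aux_lower (m k : ℕ) (hm : 3 ≤ m) (hk : 6 * k ≤ m + 6)
    (H : SimpleGraph (Fin m)) (hH : SimpleGraph.pathGraph m ≤ H)
    (hdeg : ∀ i, (univ.filter (fun j => H.Adj i j)).card ≤ 2)
    (f : Fin 1 ⊕ Fin m → ℤ) (hf : IsMRDF (join (⊤ : SimpleGraph (Fin 1)) H) f) :
    2 - (m : ℤ) + 2 * k ≤ ∑ v, f v := by
  obtain ⟨hval, hmaj, hrom⟩ := hf
  by_contra hlt
  push Not at hlt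
  have hT : 2 - (m : ℤ) + 2 * k ≤ 1 := by omega
  rw [aux_card, aux_sum_inl, if_neg (by omega), zero_add] at hmaj
  simp only [aux_sum_inr, Fintype.card_sum, Fintype.card_fin] at hmaj
  rw [Fintype.sum_sum_type] at hlt
  simp only [Fin.sum_univ_one, Fin.isValue] at hlt
  have hg : ∀ i, f (Sum.inr i) = -1 ∨ f (Sum.inr i) = 1 ∨ f (Sum.inr i) = 2 := fun i => hval _
  set g : Fin m → ℤ := fun i => f (Sum.inr i) with hgdef
  have hgi : ∀ i, f (Sum.inr i) = g i := fun _ => rfl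
  simp only [hgi] at hmaj hlt hg
  set D := univ.filter (fun i : Fin m =>
    1 ≤ f (Sum.inl 0) + (g i + ∑ j ∈ univ.filter (fun j => H.Adj i j), g j)) with hD
  set N := univ.filter (fun i => g i = -1) with hN
  set P := univ.filter (fun i => g i = 1) with hP
  set Q := univ.filter (fun i => g i = 2) with hQ
  have hsum : ∀ s : Finset (Fin m), ∑ i ∈ s, g i =
      (s.filter (fun i => g i = 1)).card + 2 * (s.filter (fun i => g i = 2)).card
        - (s.filter (fun i => g i = -1)).card := by
    intro s
    simp only [Finset.card_filter, Nat.cast_sum, Finset.mul_sum, ← Finset.sum_add_distrib,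
      ← Finset.sum_sub_distrib]
    apply Finset.sum_congr rfl
    intro i _
    rcases hg i with h | h | h <;> simp [h]
  have hcard : ∀ s : Finset (Fin m), s.card =
      (s.filter (fun i => g i = 1)).card + (s.filter (fun i => g i = 2)).card
        + (s.filter (fun i => g i = -1)).card := by
    intro s
    simp only [Finset.card_filter, ← Finset.sum_add_distrib]
    rw [Finset.card_eq_sum_ones]
    apply Finset.sum_congr rfl
    intro i _
    rcases hg i with h | h | h <;> simp [h]
  have hs : univ.sum g = _ := hsum univ
  have hc := hcard univ
  rw [← hN, ← hP, ← hQ] at hs hc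
  rw [Finset.card_fin] at hc
  rcases hval (Sum.inl 0) with h0 | h0 | h0
  rotate_left 2
  · -- center has value 2
    have hsub : D ⊆ (P ∪ Q).biUnion (fun u => insert u (univ.filter (fun j => H.Adj u j))) := by
      intro v hv
      by_contra hcon
      have hno : ∀ u, (u = v ∨ H.Adj v u) → g u = -1 := by
        intro u hu
        rcases hg u with h | h | h
        · exact h
        all_goals
          exfalso
          apply hcon
          simp only [mem_biUnion]
          refine ⟨u, by simp [hP, hQ, h], ?_⟩
          rcases hu with rfl | hu
          · simp
          · simp [hu.symm]
      simp only [hD, mem_filter, mem_univ, true_and] at hv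
      obtain ⟨u, hu⟩ : ∃ u, H.Adj v u := by
        by_cases hv0 : v.val = 0
        · exact ⟨⟨1, by omega⟩, hH (SimpleGraph.pathGraph_adj.mpr (by left; simp [hv0]))⟩
        · exact ⟨⟨v.val - 1, by omega⟩, hH (SimpleGraph.pathGraph_adj.mpr
            (by right; simp only; omega))⟩
      have hpos : 1 ≤ (univ.filter (fun j => H.Adj v j)).card :=
        Finset.card_pos.mpr ⟨u, by simpa using hu⟩
      have hsm : ∑ j ∈ univ.filter (fun j => H.Adj v j), g j =
          ∑ j ∈ univ.filter (fun j => H.Adj v j), (-1) :=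
        Finset.sum_congr rfl (fun j hj => hno j (Or.inr (by simpa using hj)))
      rw [hsm, Finset.sum_const, nsmul_eq_mul, hno v (Or.inl rfl), h0] at hv
      omega
    have hle := (Finset.card_le_card hsub).trans (Finset.card_biUnion_le_card_mul _ _ 3 (by
      intro u _
      exact (Finset.card_insert_le _ _).trans (by have := hdeg u; omega)))
    have := Finset.card_union_le P Q
    omega
  all_goals
    have hdc := Finset.sum_card_bipartiteAbove_eq_sum_card_bipartiteBelow (s := Q) (t := N)
      (r := fun a b => H.Adj a b)
    have h1 : ∀ w ∈ Q, (N.bipartiteAbove (fun a b => H.Adj a b) w).card ≤ 2 := by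
      intro w _
      refine (Finset.card_le_card ?_).trans (hdeg w)
      intro x hx
      simp only [Finset.mem_bipartiteAbove] at hx
      simp [hx.2]
    have h2 : ∀ v ∈ N, 1 ≤ (Q.bipartiteBelow (fun a b => H.Adj a b) v).card := by
      intro v hv
      simp only [hN, mem_filter, mem_univ, true_and] at hv
      obtain ⟨w, hw, hw2⟩ := hrom (Sum.inr v) hv
      rcases w with w | w
      · rw [Subsingleton.elim w 0, h0] at hw2; norm_num at hw2
      · apply Finset.card_pos.mpr
        refine ⟨w, ?_⟩
        simp only [Finset.mem_bipartiteBelow, hQ, mem_filter, mem_univ, true_and]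
        exact ⟨hw2, SimpleGraph.Adj.symm (G := H) hw⟩
    have e1 := Finset.sum_le_sum h1
    have e2 := Finset.sum_le_sum h2
    simp only [Finset.sum_const, smul_eq_mul, mul_one] at e1 e2
  · -- center has value -1
    have hQ0 : 1 ≤ Q.card := by
      obtain ⟨w, hw, hw2⟩ := hrom (Sum.inl 0) h0
      rcases w with w | w
      · rw [Subsingleton.elim w 0, h0] at hw2; norm_num at hw2
      · exact Finset.card_pos.mpr ⟨w, by simpa [hQ] using hw2⟩
    have hP0 : P.card = 0 := by omega
    have hNQ : N.card = 2 * Q.card := by omega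
    have t1 := (Finset.sum_eq_sum_iff_of_le h1).mp (by simp only [Finset.sum_const, smul_eq_mul]; omega)
    have t2 := (Finset.sum_eq_sum_iff_of_le h2).mp (by simp only [Finset.sum_const, smul_eq_mul]; omega)
    have hPe := Finset.card_eq_zero.mp hP0
    obtain ⟨v, hv⟩ : D.Nonempty := Finset.card_pos.mp (by omega)
    simp only [hD, mem_filter, mem_univ, true_and] at hv
    have a1 := hsum (univ.filter (fun j => H.Adj v j))
    have a2 := hcard (univ.filter (fun j => H.Adj v j))
    have a3 := hdeg v
    have a4 : ((univ.filter (fun j => H.Adj v j)).filter (fun i => g i = 1)).card = 0 := by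
      rw [← hP0]
      have : ((univ.filter (fun j => H.Adj v j)).filter (fun i => g i = 1)) ⊆ P := by
        intro x hx; simp only [mem_filter] at hx; simp [hP, hx.2]
      have := Finset.card_le_card this
      omega
    have a5 : N.bipartiteAbove (fun a b => H.Adj a b) v =
        (univ.filter (fun j => H.Adj v j)).filter (fun i => g i = -1) := by
      ext x; simp [Finset.mem_bipartiteAbove, hN, and_comm]
    have a6 : Q.bipartiteBelow (fun a b => H.Adj a b) v =
        (univ.filter (fun j => H.Adj v j)).filter (fun i => g i = 2) := by
      ext x; simp [Finset.mem_bipartiteBelow, hQ, and_comm, SimpleGraph.adj_comm]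
    rcases hg v with h | h | h
    · have := t2 v (by simp [hN, h])
      rw [a6] at this
      omega
    · have : v ∈ P := by simp [hP, h]
      rw [hPe] at this; simp at this
    · have := t1 v (by simp [hQ, h])
      rw [a5] at this
      omega
  · omega

theorem aux_main (m k : ℕ) (hm : 3 ≤ m) (hk1 : m + 1 ≤ 6 * k) (hk : 6 * k ≤ m + 6)
    (H : SimpleGraph (Fin m)) (hH : SimpleGraph.pathGraph m ≤ H)
    (hdeg : ∀ i, (univ.filter (fun j => H.Adj i j)).card ≤ 2) :
    mrdNum (join (⊤ : SimpleGraph (Fin 1)) H) = 2 - (m : ℤ) + 2 * k := by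
  unfold mrdNum
  apply IsLeast.csInf_eq
  refine ⟨aux_upper m k hk1 (by omega) H hH hdeg, ?_⟩
  rintro w ⟨f, hf, rfl⟩
  exact aux_lower m k hm hk H hH hdeg f hf

end MRD

/-- For `n ≥ 4`, the fan `F_n = K_1 ∨ P_{n-1}` and the wheel `W_n = K_1 ∨ C_{n-1}`
have the same majority Roman domination number. -/
theorem mrdNum_fan_eq_wheel (n : ℕ) (hn : 4 ≤ n) :
    MRD.mrdNum (MRD.join (⊤ : SimpleGraph (Fin 1)) (SimpleGraph.pathGraph (n - 1))) =
      MRD.mrdNum (MRD.join (⊤ : SimpleGraph (Fin 1)) (SimpleGraph.cycleGraph (n - 1))) := by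
  classical
  obtain ⟨r, rfl⟩ : ∃ r, n = r + 4 := ⟨n - 4, by omega⟩
  have e : r + 4 - 1 = r + 3 := by omega
  rw [e]
  have hle : SimpleGraph.pathGraph (r + 3) ≤ SimpleGraph.cycleGraph (r + 3) :=
    SimpleGraph.pathGraph_le_cycleGraph
  have hd : ∀ i, (univ.filter (fun j => (SimpleGraph.cycleGraph (r + 3)).Adj i j)).card ≤ 2 := by
    intro i
    have := SimpleGraph.cycleGraph_degree_three_le (n := r) (v := i)
    rw [← this, ← SimpleGraph.card_neighborFinset_eq_degree]
    apply Finset.card_le_card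
    intro x hx
    simpa using hx
  rw [MRD.aux_main (r + 3) ((r + 9) / 6) (by omega) (by omega) (by omega) _ le_rfl,
    MRD.aux_main (r + 3) ((r + 9) / 6) (by omega) (by omega) (by omega) _ hle]
  · intro i; convert hd i
  · intro i
    refine le_trans (Finset.card_le_card ?_) (hd i)
    intro x hx
    simp only [mem_filter, mem_univ, true_and] at hx ⊢
    exact hle hx
end

section
/- Let G be a finite simple graph of order n ≥ 1 and let H be a connected graph of order m with minimum degree δ(H) ≥ 2. Then γ_MR(G ∘ H) ≤ (m − 4)·⌈n/2⌉ − m·⌊n/2⌋ + 2n. -/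
open Finset

lemma mrd_closed_eq {V : Type*} [Fintype V] (G : SimpleGraph V) (f : V → ℤ) (v : V)
    (K : Finset V) (h : ∀ u, u ∈ K ↔ (G.Adj v u ∨ u = v)) :
    MRD.closedNbhdSum G f v = ∑ u ∈ K, f u := by
  unfold MRD.closedNbhdSum
  refine Finset.sum_congr ?_ fun _ _ => rfl
  ext u
  rw [h]
  simp

open scoped Classical in
lemma mrd_aux_sum {β : Type*} (K T : Finset β) (hT : T.card = 2) (hK : 3 ≤ K.card) :
    (-1 : ℤ) ≤ ∑ y ∈ K, (if y ∈ T then (-1 : ℤ) else 1) := by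
  have h : ∑ y ∈ K, (if y ∈ T then (-1 : ℤ) else 1)
      = (K.card : ℤ) - 2 * ((K.filter (fun y => y ∈ T)).card : ℤ) := by
    rw [Finset.card_filter]
    push_cast
    rw [Finset.card_eq_sum_ones K]
    push_cast
    rw [Finset.mul_sum, ← Finset.sum_sub_distrib]
    refine Finset.sum_congr rfl fun y _ => ?_
    split_ifs <;> norm_num
  have h2 : (K.filter (fun y => y ∈ T)).card ≤ T.card :=
    Finset.card_le_card fun y hy => (Finset.mem_filter.1 hy).2
  rw [h]
  omega

open scoped Classical in
/-- The witness: every centre gets `2`; copies over `S` get two `-1`s. -/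
noncomputable def mrdWit {α β : Type*} (S : Finset α) (T : Finset β) : α ⊕ α × β → ℤ
  | .inl _ => 2
  | .inr p => if p.1 ∈ S then (if p.2 ∈ T then -1 else 1) else -1

open scoped Classical in
lemma mrd_wit_inr {α β : Type*} [Fintype α] [Fintype β]
    (G : SimpleGraph α) (H : SimpleGraph β) [DecidableRel H.Adj] (hδ : 2 ≤ H.minDegree)
    (S : Finset α) (T : Finset β) (hT : T.card = 2) (a : α) (ha : a ∈ S) (b : β) :
    1 ≤ MRD.closedNbhdSum (MRD.corona G H) (mrdWit S T) (.inr (a, b)) := by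
  have hset : ∀ u, u ∈ ({a} : Finset α).disjSum ({a} ×ˢ (insert b (H.neighborFinset b))) ↔
      ((MRD.corona G H).Adj (.inr (a, b)) u ∨ u = .inr (a, b)) := by
    intro u
    rcases u with u | ⟨u, y⟩
    · simp [MRD.corona]
    · simp [MRD.corona]
      grind
  rw [mrd_closed_eq _ _ _ _ hset, Finset.sum_disjSum, Finset.sum_product]
  simp only [Finset.sum_singleton, mrdWit, ha, if_true]
  have := mrd_aux_sum (insert b (H.neighborFinset b)) T hT (by
    rw [Finset.card_insert_of_notMem (by simp), SimpleGraph.card_neighborFinset_eq_degree]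
    have := H.minDegree_le_degree b
    omega)
  linarith

open scoped Classical in
lemma mrd_wit_inl {α β : Type*} [Fintype α] [Fintype β]
    (G : SimpleGraph α) (H : SimpleGraph β) (hm : 3 ≤ Fintype.card β)
    (S : Finset α) (T : Finset β) (hT : T.card = 2) (a : α) (ha : a ∈ S) :
    1 ≤ MRD.closedNbhdSum (MRD.corona G H) (mrdWit S T) (.inl a) := by
  have hset : ∀ u, u ∈ (insert a (G.neighborFinset a)).disjSum
      ({a} ×ˢ (Finset.univ : Finset β)) ↔ ((MRD.corona G H).Adj (.inl a) u ∨ u = .inl a) := by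
    intro u
    rcases u with u | ⟨u, y⟩
    · simp [MRD.corona]
      grind
    · simp [MRD.corona, eq_comm]
  rw [mrd_closed_eq _ _ _ _ hset, Finset.sum_disjSum, Finset.sum_product]
  simp only [Finset.sum_singleton, mrdWit, ha, if_true]
  have := mrd_aux_sum Finset.univ T hT (by simpa using hm)
  rw [Finset.sum_insert (by simp)]
  have : (0 : ℤ) ≤ ∑ x ∈ G.neighborFinset a, (2 : ℤ) := Finset.sum_nonneg (by simp)
  linarith

open scoped Classical in
lemma mrd_wit_weight {α β : Type*} [Fintype α] [Fintype β]
    (S : Finset α) (T : Finset β) (hT : T.card = 2) :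
    ∑ v, mrdWit S T v = 2 * (Fintype.card α : ℤ) + S.card * ((Fintype.card β : ℤ) - 4)
      - (Fintype.card α - S.card) * (Fintype.card β : ℤ) := by
  have h1 : ∑ y : β, (if y ∈ T then (-1 : ℤ) else 1) = (Fintype.card β : ℤ) - 4 := by
    have : ∀ y : β, (if y ∈ T then (-1 : ℤ) else 1) = 1 - 2 * (if y ∈ T then 1 else 0) := by
      intro y; split_ifs <;> norm_num
    simp only [this, Finset.sum_sub_distrib, ← Finset.mul_sum]
    simp [hT]
  have h2 : ∀ a : α, ∑ y : β, mrdWit S T (.inr (a, y))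
      = -(Fintype.card β : ℤ) + (if a ∈ S then (2 * (Fintype.card β : ℤ) - 4) else 0) := by
    intro a
    by_cases ha : a ∈ S
    · simp only [mrdWit, ha, if_true, h1]; ring
    · simp [mrdWit, ha]
  rw [Fintype.sum_sum_type, Fintype.sum_prod_type]
  simp only [h2, Finset.sum_add_distrib]
  simp [mrdWit]
  ring

/-- Let `G` have order `n ≥ 1` and let `H` be connected of order `m` with `δ(H) ≥ 2`.
Then `γ_MR(G ∘ H) ≤ (m - 4)·⌈n/2⌉ - m·⌊n/2⌋ + 2n`. -/
theorem mrdNum_corona_upper {α β : Type*} [Fintype α] [Fintype β]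
    (G : SimpleGraph α) (H : SimpleGraph β) [DecidableRel H.Adj]
    (hn : 1 ≤ Fintype.card α) (hH : H.Connected) (hδ : 2 ≤ H.minDegree) :
    MRD.mrdNum (MRD.corona G H) ≤
      ((Fintype.card β : ℤ) - 4) * ⌈(Fintype.card α : ℚ) / 2⌉
        - (Fintype.card β : ℤ) * ⌊(Fintype.card α : ℚ) / 2⌋ + 2 * Fintype.card α := by
  classical
  have hm : 3 ≤ Fintype.card β := by
    obtain ⟨b⟩ := hH.nonempty
    have h1 := H.minDegree_le_degree b
    have h2 := H.degree_lt_card_verts b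
    omega
  obtain ⟨T, -, hT⟩ := Finset.exists_subset_card_eq (s := (Finset.univ : Finset β)) (n := 2)
    (by rw [Finset.card_univ]; omega)
  obtain ⟨S, -, hS⟩ := Finset.exists_subset_card_eq (s := (Finset.univ : Finset α))
    (n := (Fintype.card α + 1) / 2) (by rw [Finset.card_univ]; omega)
  have hc : ⌈(Fintype.card α : ℚ) / 2⌉ = (S.card : ℤ) := by
    rw [hS, Int.ceil_eq_iff]
    rcases Nat.even_or_odd' (Fintype.card α) with ⟨k, hk | hk⟩
    · rw [hk, show (2 * k + 1) / 2 = k by omega]; push_cast; constructor <;> linarith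
    · rw [hk, show (2 * k + 1 + 1) / 2 = k + 1 by omega]; push_cast; constructor <;> linarith
  have hf : ⌊(Fintype.card α : ℚ) / 2⌋ = (Fintype.card α : ℤ) - S.card := by
    rw [hS, Int.floor_eq_iff]
    rcases Nat.even_or_odd' (Fintype.card α) with ⟨k, hk | hk⟩
    · rw [hk, show (2 * k + 1) / 2 = k by omega]; push_cast; constructor <;> linarith
    · rw [hk, show (2 * k + 1 + 1) / 2 = k + 1 by omega]; push_cast; constructor <;> linarith
  rw [hc, hf]
  unfold MRD.mrdNum
  refine csInf_le ?_ ⟨mrdWit S T, ⟨?_, ?_, ?_⟩, ?_⟩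
  · refine ⟨∑ _v : α ⊕ α × β, (-1 : ℤ), ?_⟩
    rintro w ⟨f, hf, rfl⟩
    refine Finset.sum_le_sum fun v _ => ?_
    rcases hf.1 v with h | h | h <;> omega
  · rintro (v | ⟨v, y⟩)
    · simp [mrdWit]
    · simp only [mrdWit]
      split_ifs <;> simp
  · have hsub : (S.disjSum (S ×ˢ (Finset.univ : Finset β))).card ≤ (Finset.univ.filter
        (fun v => 1 ≤ MRD.closedNbhdSum (MRD.corona G H) (mrdWit S T) v)).card := by
      refine Finset.card_le_card ?_
      rintro (v | ⟨v, y⟩) hv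
      · simp at hv
        simpa using mrd_wit_inl G H hm S T hT v hv
      · simp at hv
        simpa using mrd_wit_inr G H hδ S T hT v hv y
    rw [Finset.card_disjSum, Finset.card_product, Finset.card_univ] at hsub
    rw [Fintype.card_sum, Fintype.card_prod]
    have h2 : Fintype.card α ≤ 2 * S.card := by omega
    convert le_trans ?_ (Nat.mul_le_mul_left 2 hsub) using 3
    nlinarith [Nat.mul_le_mul_right (Fintype.card β) h2]
  · rintro (v | ⟨v, y⟩) h
    · simp [mrdWit] at h
    · exact ⟨.inl v, by simp [MRD.corona], rfl⟩
  · rw [mrd_wit_weight S T hT]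
    ring
end
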